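/- arXiv:0707.1974 — 2 statements merged into one kernel-verified Lean document; each statement's English description precedes it below -/
import Mathlib

section
/- Lemma part (b) (equation (2.15)). Let 0 < 2β < 1, c > 0, k ≥ 0 and p > 0. Then ∫_0^∞ e^{−pt} [ (βc/(√π·t^{2β+1})) ∫_0^∞ u^{−1/2}·exp(−c²/(4u))·exp(−k²u)·M(u/t^{2β}; 2β) du ] dt = exp(−c·√(p^{2β} + k²)). (The paper's statement is the case c = (z+ατ)/a, k = λ/(2a) with z, τ ≥ 0, a, λ > 0.) -/
open MeasureTheory Real Filter Set

/-- The Wright-type auxiliary function `M(y; δ)`. -/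
noncomputable def Mwr (y δ : ℝ) : ℝ :=
  ∑' n : ℕ, (-y) ^ n / ((n.factorial : ℝ) * Real.Gamma (-δ * (n : ℝ) + 1 - δ))

open scoped Topology

theorem integral_Ioi_zero_eq_integral_exp (g : ℝ → ℂ) :
    ∫ x in Ioi (0 : ℝ), g x = ∫ a : ℝ, (Real.exp a : ℂ) * g (Real.exp a) := by
  have h := integral_image_eq_integral_abs_deriv_smul (s := univ) (f := Real.exp)
    (f' := Real.exp) MeasurableSet.univ
    (fun x _ => (Real.hasDerivAt_exp x).hasDerivWithinAt) Real.exp_injective.injOn g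
  rw [image_univ, Real.range_exp] at h
  simpa [abs_of_pos (Real.exp_pos _)] using h

theorem integrableOn_Ioi_zero_iff_integrable_exp (g : ℝ → ℂ) :
    IntegrableOn g (Ioi 0) ↔ Integrable fun a : ℝ => (Real.exp a : ℂ) * g (Real.exp a) := by
  have h := integrableOn_image_iff_integrableOn_abs_deriv_smul (s := univ) (f := Real.exp)
    (f' := Real.exp) MeasurableSet.univ
    (fun x _ => (Real.hasDerivAt_exp x).hasDerivWithinAt) Real.exp_injective.injOn g
  rw [image_univ, Real.range_exp] at h
  simpa [abs_of_pos (Real.exp_pos _), integrableOn_univ] using h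

/-- Cauchy's theorem on a horizontal strip, for functions vanishing at both ends. -/
theorem tendsto_integral_strip_sub (f : ℂ → ℂ) (b d : ℝ)
    (hf : DifferentiableOn ℂ f {z | z.im ∈ uIcc b d}) (g : ℝ → ℝ) (hg : Tendsto g atTop (𝓝 0))
    (hfg : ∀ᶠ R in atTop, ∀ y ∈ uIcc b d,
      ‖f ((R : ℝ) + y * Complex.I)‖ ≤ g R ∧ ‖f ((-R : ℝ) + y * Complex.I)‖ ≤ g R) :
    Tendsto (fun R : ℝ => (∫ a in (-R)..R, f (a + b * Complex.I)) -
      ∫ a in (-R)..R, f (a + d * Complex.I)) atTop (𝓝 0) := by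
  have hg' : Tendsto (fun R => 2 * (g R * |d - b|)) atTop (𝓝 0) := by
    simpa using (hg.mul_const |d - b|).const_mul 2
  refine squeeze_zero_norm' ?_ hg'
  filter_upwards [hfg] with R hR
  have h := Complex.integral_boundary_rect_eq_zero_of_differentiableOn f
    (⟨-R, b⟩ : ℂ) (⟨R, d⟩ : ℂ) (hf.mono fun z hz => hz.2)
  have h1 : ‖∫ y in b..d, f ((R : ℝ) + y * Complex.I)‖ ≤ g R * |d - b| :=
    intervalIntegral.norm_integral_le_of_norm_le_const fun y hy => (hR y (uIoc_subset_uIcc hy)).1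
  have h2 : ‖∫ y in b..d, f ((-R : ℝ) + y * Complex.I)‖ ≤ g R * |d - b| :=
    intervalIntegral.norm_integral_le_of_norm_le_const fun y hy => (hR y (uIoc_subset_uIcc hy)).2
  simp only [smul_eq_mul] at h
  have h3 : (∫ a in (-R)..R, f (a + b * Complex.I)) - ∫ a in (-R)..R, f (a + d * Complex.I) =
      Complex.I * (∫ y in b..d, f ((-R : ℝ) + y * Complex.I)) -
        Complex.I * ∫ y in b..d, f ((R : ℝ) + y * Complex.I) := by
    linear_combination h
  rw [h3]
  refine (norm_sub_le _ _).trans ?_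
  rw [norm_mul, norm_mul, Complex.norm_I]
  linarith

theorem tendsto_mul_sub_mul_exp_atBot (s κ : ℝ) (hκ : 0 < κ) :
    Tendsto (fun R : ℝ => s * R - κ * Real.exp R) atTop atBot := by
  have h1 : Tendsto (fun R : ℝ => s * (R / Real.exp R) - κ) atTop (𝓝 (s * 0 - κ)) := by
    refine Tendsto.sub_const (Tendsto.const_mul s ?_) κ
    simpa using Real.tendsto_pow_mul_exp_neg_atTop_nhds_zero 1 |>.congr fun x => by
      rw [Real.exp_neg, pow_one, div_eq_mul_inv]
  have h2 := Real.tendsto_exp_atTop.atTop_mul_neg (by linarith : s * 0 - κ < 0) h1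
  refine h2.congr fun R => ?_
  field_simp

/-- Gamma integral along a ray in the right half plane. -/
theorem integral_rpow_mul_exp_ray (s φ : ℝ) (hs : 0 < s) (hφ : |φ| < π / 2) :
    ∫ x in Ioi (0 : ℝ), ((x ^ (s - 1) : ℝ) : ℂ) * Complex.exp (-(x * Complex.exp (φ * Complex.I)))
      = Complex.exp (-(s * φ * Complex.I)) * Real.Gamma s := by
  have hcos : 0 < Real.cos φ :=
    Real.cos_pos_of_mem_Ioo ⟨by linarith [neg_abs_le φ], by linarith [le_abs_self φ]⟩
  have hnorm : ∀ x : ℝ, 0 < x → ∀ ψ : ℝ,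
      ‖((x ^ (s - 1) : ℝ) : ℂ) * Complex.exp (-(x * Complex.exp (ψ * Complex.I)))‖
      = x ^ (s - 1) * Real.exp (-(Real.cos ψ) * x) := by
    intro x hx ψ
    rw [norm_mul, Complex.norm_exp, Complex.norm_real, Real.norm_eq_abs,
      abs_of_nonneg (by positivity)]
    congr 2
    simp [Complex.exp_ofReal_mul_I_re]
    ring
  have h_int : ∀ ψ : ℝ, 0 < Real.cos ψ → IntegrableOn (fun x : ℝ => ((x ^ (s - 1) : ℝ) : ℂ) *
      Complex.exp (-(x * Complex.exp (ψ * Complex.I)))) (Ioi 0) := by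
    intro ψ hψ
    have := integrableOn_rpow_mul_exp_neg_mul_rpow (s := s - 1) (p := 1) (b := Real.cos ψ)
      (by linarith) one_pos hψ
    refine Integrable.mono' this ?_ ?_
    · apply Measurable.aestronglyMeasurable
      fun_prop
    · refine (ae_restrict_iff' measurableSet_Ioi).mpr (ae_of_all _ fun x hx => ?_)
      rw [hnorm x hx, Real.rpow_one]
  -- `F (a + ψ I)` is the integrand along the ray of angle `ψ` in logarithmic coordinates
  let F : ℂ → ℂ := fun v => Complex.exp (s * v) * Complex.exp (-Complex.exp v)
  have hF : ∀ ψ a : ℝ, F (a + ψ * Complex.I) = Complex.exp (s * ψ * Complex.I) *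
      ((Real.exp a : ℂ) * ((((Real.exp a) ^ (s - 1) : ℝ) : ℂ) *
      Complex.exp (-((Real.exp a : ℝ) * Complex.exp (ψ * Complex.I))))) := by
    intro ψ a
    simp only [F]
    rw [← Real.exp_mul]
    push_cast
    simp only [← Complex.exp_add]
    congr 1
    ring
  have hline : ∀ ψ : ℝ, 0 < Real.cos ψ →
      Tendsto (fun R : ℝ => ∫ a in (-R)..R, F (a + ψ * Complex.I)) atTop
      (𝓝 (Complex.exp (s * ψ * Complex.I) * ∫ x in Ioi (0 : ℝ), ((x ^ (s - 1) : ℝ) : ℂ) *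
        Complex.exp (-(x * Complex.exp (ψ * Complex.I))))) := by
    intro ψ hψ
    rw [integral_Ioi_zero_eq_integral_exp, ← integral_const_mul]
    have h := (integrableOn_Ioi_zero_iff_integrable_exp _).mp (h_int ψ hψ)
    have := intervalIntegral_tendsto_integral (h.const_mul (Complex.exp (s * ψ * Complex.I)))
      tendsto_neg_atTop_atBot tendsto_id
    refine this.congr fun R => ?_
    simp only [id, hF]
  have hcosle : ∀ y ∈ uIcc 0 φ, Real.cos φ ≤ Real.cos y := by
    intro y hy
    rw [← Real.cos_abs φ, ← Real.cos_abs y]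
    apply Real.cos_le_cos_of_nonneg_of_le_pi (abs_nonneg _) (by linarith [Real.pi_pos])
    simpa using abs_sub_left_of_mem_uIcc hy
  have hFn : ∀ R y : ℝ, ‖F (R + y * Complex.I)‖ = Real.exp (s * R - Real.cos y * Real.exp R) := by
    intro R y
    simp only [F]
    rw [← Complex.exp_add, Complex.norm_exp]
    congr 1
    simp [Complex.exp_re]
    ring
  have hstrip := tendsto_integral_strip_sub F 0 φ (by fun_prop)
    (fun R => Real.exp (s * R - Real.cos φ * Real.exp R) + Real.exp (-(s * R)))
    (by
      simpa using (Real.tendsto_exp_atBot.comp (tendsto_mul_sub_mul_exp_atBot s _ hcos)).add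
        (Real.tendsto_exp_neg_atTop_nhds_zero.comp (tendsto_id.const_mul_atTop hs)))
    (by
      filter_upwards [eventually_ge_atTop 0] with R hR y hy
      have hc := hcosle y hy
      rw [hFn, hFn]
      refine ⟨le_add_of_le_of_nonneg ?_ (Real.exp_pos _).le,
        le_add_of_nonneg_of_le (Real.exp_pos _).le ?_⟩
      · gcongr
      · gcongr
        nlinarith [mul_pos (hcos.trans_le hc) (Real.exp_pos (-R))])
  have h0 := (hline 0 (by simp)).sub (hline φ hcos)
  have := tendsto_nhds_unique h0 hstrip
  have hG : ∫ x in Ioi (0 : ℝ), ((x ^ (s - 1) : ℝ) : ℂ) *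
      Complex.exp (-(x * Complex.exp ((0 : ℝ) * Complex.I))) = Real.Gamma s := by
    rw [Real.Gamma_eq_integral hs, ← integral_complex_ofReal]
    congr 1
    ext x
    push_cast
    simp [mul_comm]
  rw [hG] at this
  rw [Complex.exp_neg, eq_inv_mul_iff_mul_eq₀ (Complex.exp_ne_zero _)]
  simpa using (sub_eq_zero.mp this).symm

theorem sinh_add_mul_I_ne_zero (a : ℝ) {θ : ℝ} (hθ : Real.sin θ ≠ 0) :
    Complex.sinh (a + θ * Complex.I) ≠ 0 := by
  intro h
  have h2 := congrArg Complex.im h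
  rw [Complex.sinh_add, Complex.cosh_mul_I, Complex.sinh_mul_I] at h2
  simp [← Complex.ofReal_cosh, ← Complex.ofReal_sinh, ← Complex.ofReal_cos,
    ← Complex.ofReal_sin] at h2
  exact h2.elim (Real.cosh_pos a).ne' hθ

theorem integral_im_inv_sinh_line (θ R : ℝ) (hθ : 0 < Real.sin θ) :
    (∫ a in (-R)..R, (Complex.sinh (a + θ * Complex.I))⁻¹).im =
      -(2 * Real.arctan (Real.sinh R / Real.sin θ)) := by
  have hre : ∀ a : ℝ, (Complex.sinh (a + θ * Complex.I)) =
      ((Real.sinh a * Real.cos θ : ℝ) : ℂ) + ((Real.cosh a * Real.sin θ : ℝ) : ℂ) * Complex.I := by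
    intro a
    rw [Complex.sinh_add, Complex.cosh_mul_I, Complex.sinh_mul_I]
    push_cast
    ring
  have hcont : Continuous fun a : ℝ => (Complex.sinh (a + θ * Complex.I))⁻¹ :=
    (Complex.continuous_sinh.comp (by fun_prop)).inv₀ (sinh_add_mul_I_ne_zero · hθ.ne')
  have him : ∀ a : ℝ, ((Complex.sinh (a + θ * Complex.I))⁻¹).im =
      -(1 / (1 + (Real.sinh a / Real.sin θ) ^ 2) * (Real.cosh a / Real.sin θ)) := by
    intro a
    rw [Complex.inv_im, hre, Complex.normSq_add_mul_I]
    simp only [Complex.add_im, Complex.ofReal_im, Complex.mul_im, Complex.ofReal_re, Complex.I_im,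
      Complex.I_re]
    have h1 : (Real.sinh a * Real.cos θ) ^ 2 + (Real.cosh a * Real.sin θ) ^ 2 =
        Real.sinh a ^ 2 + Real.sin θ ^ 2 := by
      rw [mul_pow, mul_pow, Real.cosh_sq, Real.cos_sq']
      ring
    rw [h1]
    have : Real.sinh a ^ 2 + Real.sin θ ^ 2 ≠ 0 := by positivity
    have : Real.sin θ ^ 2 + Real.sinh a ^ 2 ≠ 0 := by positivity
    field_simp
    ring
  have hcomm := Complex.imCLM.intervalIntegral_comp_comm
    (hcont.intervalIntegrable (μ := volume) (-R) R)
  simp only [Complex.imCLM_apply] at hcomm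
  rw [← hcomm]
  have hd : ∀ a : ℝ, HasDerivAt (fun a => -Real.arctan (Real.sinh a / Real.sin θ))
      ((Complex.sinh (a + θ * Complex.I))⁻¹).im a := by
    intro a
    rw [him]
    exact (((Real.hasDerivAt_sinh a).div_const _).arctan).neg
  rw [intervalIntegral.integral_eq_sub_of_hasDerivAt (fun a _ => hd a)
    ((Complex.continuous_im.comp hcont).intervalIntegrable _ _)]
  rw [Real.sinh_neg, neg_div, Real.arctan_neg]
  ring

theorem integrableOn_sector_kernel (δ θ U p : ℝ) (hδ : 0 < δ) (hU : 0 < U) (hp : 0 < p)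
    (hcos : Real.cos θ ≤ 0) (hcosδ : 0 < Real.cos (δ * θ)) :
    IntegrableOn (fun x : ℝ => Complex.exp (θ * Complex.I) / (p - x * Complex.exp (θ * Complex.I)) *
      Complex.exp (-(U * (x ^ δ : ℝ) * Complex.exp (δ * θ * Complex.I)))) (Ioi 0) := by
  have h := (integrableOn_rpow_mul_exp_neg_mul_rpow (s := 0) (p := δ) (b := U * Real.cos (δ * θ))
    (by norm_num) hδ (by positivity)).const_mul p⁻¹
  refine Integrable.mono' h (Measurable.aestronglyMeasurable (by fun_prop)) ?_
  refine (ae_restrict_iff' measurableSet_Ioi).mpr (ae_of_all _ fun x hx => ?_)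
  have hx' : 0 < x := hx
  rw [norm_mul, norm_div, Complex.norm_exp_ofReal_mul_I, Complex.norm_exp, Real.rpow_zero, one_mul,
    one_div]
  refine mul_le_mul ?_ (le_of_eq ?_) (Real.exp_pos _).le (by positivity)
  · refine inv_anti₀ hp (le_trans ?_ (Complex.re_le_norm _))
    simp [Complex.exp_re]
    nlinarith
  · congr 1
    simp [Complex.exp_re, Complex.exp_im]
    ring

/-- Cauchy's integral formula on a sector for `exp (-U z ^ δ)`, at the point `1`. -/
theorem im_integral_sector_kernel_one (δ θ U : ℝ) (hδ : 0 < δ) (hU : 0 < U) (hθ : π / 2 < θ)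
    (hθπ : θ < π) (hδθ : δ * θ < π / 2) :
    (∫ x in Ioi (0 : ℝ), Complex.exp (θ * Complex.I) / (1 - x * Complex.exp (θ * Complex.I)) *
      Complex.exp (-(U * (x ^ δ : ℝ) * Complex.exp (δ * θ * Complex.I)))).im =
      π * Real.exp (-U) := by
  have hθ0 : 0 < θ := by linarith [Real.pi_pos]
  have hsin : 0 < Real.sin θ := Real.sin_pos_of_pos_of_lt_pi hθ0 hθπ
  have hcos : Real.cos θ ≤ 0 := Real.cos_nonpos_of_pi_div_two_le_of_le hθ.le (by linarith)
  have hcosδ : 0 < Real.cos (δ * θ) := Real.cos_pos_of_mem_Ioo ⟨by nlinarith [Real.pi_pos], hδθ⟩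
  let N : ℂ → ℂ := fun v => Complex.exp (-(U * Complex.exp (δ * v))) * (Complex.exp v + 1) -
    2 * Complex.exp (-U)
  let D : ℂ → ℂ := fun v => Complex.exp v - 1
  let G : ℂ → ℂ := fun v => Complex.exp (-(U * Complex.exp (δ * v))) *
    (Complex.exp v / (Complex.exp v - 1))
  let K : ℂ → ℂ := fun v => dslope N 0 v * Complex.exp v / ((Complex.exp v + 1) * dslope D 0 v)
  have hN0 : N 0 = 0 := by simp [N]; ring
  have hD0 : D 0 = 0 := by simp [D]
  have hplus : ∀ v : ℂ, v.im ∈ Icc 0 θ → Complex.exp v + 1 ≠ 0 := by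
    intro v hv h
    have h1 := congrArg Complex.im h
    have h2 := congrArg Complex.re h
    simp only [Complex.add_im, Complex.exp_im, Complex.one_im, add_zero, Complex.zero_im,
      mul_eq_zero, Complex.add_re, Complex.exp_re, Complex.one_re, Complex.zero_re] at h1 h2
    rcases hv.1.eq_or_lt with h3 | h3
    · rw [← h3, Real.cos_zero] at h2
      linarith [Real.exp_pos v.re]
    · have := Real.sin_pos_of_pos_of_lt_pi h3 (by linarith [hv.2])
      rcases h1 with h1 | h1
      · exact (Real.exp_pos _).ne' h1
      · linarith
  have hminus : ∀ v : ℂ, v.im ∈ Icc 0 θ → v ≠ 0 → Complex.exp v - 1 ≠ 0 := by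
    intro v hv hv0 h
    have h1 := congrArg Complex.im h
    simp only [Complex.sub_im, Complex.exp_im, Complex.one_im, sub_zero, Complex.zero_im,
      mul_eq_zero] at h1
    rcases hv.1.eq_or_lt with h3 | h3
    · have h2 := congrArg Complex.re h
      simp only [Complex.sub_re, Complex.exp_re, Complex.one_re, Complex.zero_re, ← h3,
        Real.cos_zero, mul_one] at h2
      have : v.re = 0 := Real.exp_eq_one_iff _ |>.mp (by linarith)
      exact hv0 (Complex.ext this h3.symm)
    · have := Real.sin_pos_of_pos_of_lt_pi h3 (by linarith [hv.2])
      rcases h1 with h1 | h1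
      · exact (Real.exp_pos _).ne' h1
      · linarith
  have hDne : ∀ v : ℂ, v.im ∈ Icc 0 θ → dslope D 0 v ≠ 0 := by
    intro v hv
    rcases eq_or_ne v 0 with rfl | hv0
    · have : HasDerivAt D (Complex.exp 0) 0 := (Complex.hasDerivAt_exp 0).sub_const 1
      rw [dslope_same, this.deriv]
      simp
    · rw [dslope_of_ne _ hv0, slope_def_field, hD0, sub_zero, sub_zero]
      exact div_ne_zero (hminus v hv hv0) hv0
  have hKG : ∀ v : ℂ, v.im ∈ Icc 0 θ → v ≠ 0 →
      K v = G v - Complex.exp (-U) * (Complex.sinh v)⁻¹ := by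
    intro v hv hv0
    have h1 := hplus v hv
    have h2 := hminus v hv hv0
    have h3 : (Complex.sinh v)⁻¹ =
        2 * Complex.exp v / ((Complex.exp v + 1) * (Complex.exp v - 1)) := by
      rw [Complex.sinh, Complex.exp_neg]
      have h4 := Complex.exp_ne_zero v
      have h5 : Complex.exp v - (Complex.exp v)⁻¹ =
        (Complex.exp v + 1) * (Complex.exp v - 1) / Complex.exp v := by
        field_simp
        ring
      rw [h5]
      field_simp
    simp only [K, G]
    rw [dslope_of_ne _ hv0, dslope_of_ne _ hv0, slope_def_field, slope_def_field, hD0, hN0, h3]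
    simp only [sub_zero, N, D]
    field_simp
  have hKd : DifferentiableOn ℂ K {z | z.im ∈ uIcc 0 θ} := by
    rw [uIcc_of_le hθ0.le]
    have hNd : Differentiable ℂ (dslope N 0) := by
      rw [← differentiableOn_univ, Complex.differentiableOn_dslope univ_mem]
      fun_prop
    have hDd : Differentiable ℂ (dslope D 0) := by
      rw [← differentiableOn_univ, Complex.differentiableOn_dslope univ_mem]
      fun_prop
    intro v hv
    refine DifferentiableAt.differentiableWithinAt ?_
    refine DifferentiableAt.div ?_ ?_ (mul_ne_zero (hplus v hv) (hDne v hv))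
    · exact (hNd v).mul Complex.differentiable_exp.differentiableAt
    · exact (Complex.differentiable_exp.differentiableAt.add_const 1).mul (hDd v)
  have hexpδ : ∀ v : ℂ, v.im ∈ Icc 0 θ → ‖Complex.exp (-(U * Complex.exp (δ * v)))‖ ≤
      Real.exp (-(U * Real.cos (δ * θ) * Real.exp (δ * v.re))) := by
    intro v hv
    have h1 : Real.cos (δ * θ) ≤ Real.cos (δ * v.im) :=
      Real.cos_le_cos_of_nonneg_of_le_pi (mul_nonneg hδ.le hv.1) (by linarith [Real.pi_pos])
        (mul_le_mul_of_nonneg_left hv.2 hδ.le)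
    rw [Complex.norm_exp]
    have h2 : (-(U * Complex.exp (δ * v))).re =
        -(U * Real.cos (δ * v.im) * Real.exp (δ * v.re)) := by
      simp [Complex.exp_re]
      ring
    rw [h2]
    gcongr
  have hsinh : ∀ v : ℂ, v.re ≠ 0 → ‖(Complex.sinh v)⁻¹‖ ≤ |v.re|⁻¹ := by
    intro v hv
    have h1 : Real.sinh |v.re| ≤ ‖Complex.sinh v‖ := by
      rw [Complex.sinh, norm_div, Complex.norm_ofNat, Real.sinh_eq]
      have h2 := norm_sub_norm_le (Complex.exp v) (Complex.exp (-v))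
      have h3 := norm_sub_norm_le (Complex.exp (-v)) (Complex.exp v)
      rw [norm_sub_rev] at h3
      simp only [Complex.norm_exp, Complex.neg_re] at h2 h3
      rcases abs_cases v.re with ⟨h, _⟩ | ⟨h, _⟩ <;> rw [h]
      · gcongr
      · rw [neg_neg]
        gcongr
    rw [norm_inv]
    exact inv_anti₀ (abs_pos.mpr hv) ((Real.self_le_sinh_iff.mpr (abs_nonneg _)).trans h1)
  have hexpU : ‖Complex.exp (-U)‖ ≤ 1 := by
    rw [Complex.norm_exp]
    simpa using hU.le
  have hbound : ∀ᶠ R in atTop, ∀ y ∈ uIcc 0 θ,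
      ‖K ((R : ℝ) + y * Complex.I)‖ ≤ 2 * Real.exp (-(U * Real.cos (δ * θ) * Real.exp (δ * R))) +
        2 * Real.exp (-R) + R⁻¹ ∧
      ‖K ((-R : ℝ) + y * Complex.I)‖ ≤ 2 * Real.exp (-(U * Real.cos (δ * θ) * Real.exp (δ * R))) +
        2 * Real.exp (-R) + R⁻¹ := by
    filter_upwards [eventually_ge_atTop 1] with R hR y hy
    rw [uIcc_of_le hθ0.le] at hy
    have hR0 : 0 < R := by linarith
    have hexpR : 2 ≤ Real.exp R := by linarith [Real.add_one_le_exp R]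
    have hexpR' : Real.exp (-R) ≤ 1 / 2 := by
      rw [Real.exp_neg, one_div]
      exact inv_anti₀ two_pos hexpR
    have hK : ∀ S : ℝ, |S| = R → ‖K (S + y * Complex.I)‖ ≤
        ‖G (S + y * Complex.I)‖ + R⁻¹ := by
      intro S hS
      have hS0 : S ≠ 0 := abs_pos.mp (hS ▸ hR0)
      have h1 : ((S : ℂ) + y * Complex.I).re = S := by simp
      rw [hKG _ (by simpa using hy) (fun h => hS0 (by simpa [h] using h1.symm))]
      refine (norm_sub_le _ _).trans (add_le_add_right ?_ _)
      rw [norm_mul]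
      have h2 := hsinh (S + y * Complex.I) (by rwa [h1])
      rw [h1, hS] at h2
      exact (mul_le_mul hexpU h2 (norm_nonneg _) zero_le_one).trans (one_mul _).le
    have hnorm : ∀ S : ℝ, ‖Complex.exp ((S : ℂ) + y * Complex.I)‖ = Real.exp S := by
      intro S
      simp [Complex.norm_exp]
    constructor
    · refine (hK R (abs_of_pos hR0)).trans (add_le_add_left ?_ _)
      have h1 := hexpδ (R + y * Complex.I) (by simpa using hy)
      have h2 : ‖Complex.exp (R + y * Complex.I) / (Complex.exp (R + y * Complex.I) - 1)‖ ≤ 2 := by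
        have h3 := norm_sub_norm_le (Complex.exp (R + y * Complex.I)) 1
        rw [norm_div, hnorm]
        rw [hnorm, norm_one] at h3
        rw [div_le_iff₀ (by linarith)]
        linarith
      simp only [Complex.add_re, Complex.ofReal_re, Complex.mul_re, Complex.I_re, mul_zero,
        Complex.ofReal_im, Complex.I_im, mul_one, sub_self, add_zero] at h1
      have h4 := mul_le_mul h1 h2 (norm_nonneg _) (Real.exp_pos _).le
      rw [← norm_mul] at h4
      have h5 := Real.exp_pos (-R)
      simp only [G]
      linarith
    · refine (hK (-R) (by rw [abs_neg, abs_of_pos hR0])).trans (add_le_add_left ?_ _)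
      have h1 := hexpδ ((-R : ℝ) + y * Complex.I) (by simpa using hy)
      have h2 : ‖Complex.exp ((-R : ℝ) + y * Complex.I) /
          (Complex.exp ((-R : ℝ) + y * Complex.I) - 1)‖ ≤ 2 * Real.exp (-R) := by
        have h3 := norm_sub_norm_le 1 (Complex.exp ((-R : ℝ) + y * Complex.I))
        rw [norm_sub_rev] at h3
        rw [norm_div, hnorm]
        rw [hnorm, norm_one] at h3
        rw [div_le_iff₀ (by linarith)]
        nlinarith [Real.exp_pos (-R)]
      have h3 := h1.trans (Real.exp_le_one_iff.mpr (neg_nonpos.mpr (by positivity)))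
      have h4 := mul_le_mul h3 h2 (norm_nonneg _) zero_le_one
      rw [← norm_mul] at h4
      have h5 := Real.exp_pos (-(U * Real.cos (δ * θ) * Real.exp (δ * R)))
      simp only [G]
      linarith
  have hlim : Tendsto (fun R : ℝ => 2 * Real.exp (-(U * Real.cos (δ * θ) * Real.exp (δ * R))) +
      2 * Real.exp (-R) + R⁻¹) atTop (𝓝 0) := by
    have h1 : Tendsto (fun R : ℝ => U * Real.cos (δ * θ) * Real.exp (δ * R)) atTop atTop :=
      (Real.tendsto_exp_atTop.comp (tendsto_id.const_mul_atTop hδ)).const_mul_atTop (by positivity)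
    simpa using (((Real.tendsto_exp_neg_atTop_nhds_zero.comp h1).const_mul 2).add
      (Real.tendsto_exp_neg_atTop_nhds_zero.const_mul 2)).add tendsto_inv_atTop_zero
  have hstrip := tendsto_integral_strip_sub K 0 θ hKd _ hlim hbound
  -- on the real axis `K` is real
  have hreal : ∀ R : ℝ, (∫ a in (-R)..R, K (a + (0 : ℝ) * Complex.I)).im = 0 := by
    intro R
    have h : ∫ a in (-R)..R, K (a + (0 : ℝ) * Complex.I) =
        ∫ a in (-R)..R, ((Real.exp (-(U * Real.exp (δ * a))) *
          (Real.exp a / (Real.exp a - 1)) - Real.exp (-U) * (Real.sinh a)⁻¹ : ℝ) : ℂ) := by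
      refine intervalIntegral.integral_congr_ae ?_
      filter_upwards [compl_mem_ae_iff.mpr (measure_singleton (0 : ℝ))] with a ha _
      have ha' : a ≠ 0 := ha
      rw [Complex.ofReal_zero, zero_mul, add_zero,
        hKG _ (by simpa using hθ0.le) (by simpa using ha')]
      simp only [G]
      push_cast
      rfl
    rw [h, intervalIntegral.integral_ofReal, Complex.ofReal_im]
  have h_int := (integrableOn_Ioi_zero_iff_integrable_exp _).mp
    (integrableOn_sector_kernel δ θ U 1 hδ hU one_pos hcos hcosδ)
  have hJG : ∀ a : ℝ, (Real.exp a : ℂ) * (Complex.exp (θ * Complex.I) /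
      ((1 : ℝ) - (Real.exp a : ℝ) * Complex.exp (θ * Complex.I)) *
      Complex.exp (-(U * ((Real.exp a) ^ δ : ℝ) * Complex.exp (δ * θ * Complex.I)))) =
      -G (a + θ * Complex.I) := by
    intro a
    simp only [G]
    rw [← Real.exp_mul]
    push_cast
    have h1 : Complex.exp (a + θ * Complex.I) = Complex.exp a * Complex.exp (θ * Complex.I) :=
      Complex.exp_add _ _
    have h2 : Complex.exp (δ * (a + θ * Complex.I)) =
        Complex.exp (a * δ) * Complex.exp (δ * θ * Complex.I) := by
      rw [← Complex.exp_add]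
      ring_nf
    rw [h1, h2, ← neg_sub (Complex.exp a * Complex.exp (θ * Complex.I)) 1, div_neg]
    ring_nf
  simp only [hJG] at h_int
  have hGint : Integrable fun a : ℝ => G (a + θ * Complex.I) := by simpa using h_int.neg
  have hval := integral_Ioi_zero_eq_integral_exp fun x : ℝ => Complex.exp (θ * Complex.I) /
      ((1 : ℝ) - x * Complex.exp (θ * Complex.I)) *
      Complex.exp (-(U * (x ^ δ : ℝ) * Complex.exp (δ * θ * Complex.I)))
  simp only [hJG, integral_neg] at hval
  rw [Complex.ofReal_one] at hval
  rw [hval, Complex.neg_im]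
  have hsplit : ∀ R : ℝ, ∫ a in (-R)..R, K (a + θ * Complex.I) =
      (∫ a in (-R)..R, G (a + θ * Complex.I)) -
        Complex.exp (-U) * ∫ a in (-R)..R, (Complex.sinh (a + θ * Complex.I))⁻¹ := by
    intro R
    rw [← intervalIntegral.integral_const_mul, ← intervalIntegral.integral_sub
      hGint.intervalIntegrable]
    · refine intervalIntegral.integral_congr fun a _ => ?_
      refine hKG _ (by simpa using hθ0.le) fun h => ?_
      have := congrArg Complex.im h
      simp at this
      exact hθ0.ne' this
    · refine Continuous.intervalIntegrable (continuous_const.mul ?_) _ _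
      exact (Complex.continuous_sinh.comp (by fun_prop)).inv₀
        (sinh_add_mul_I_ne_zero · hsin.ne')
  have hG := intervalIntegral_tendsto_integral hGint tendsto_neg_atTop_atBot tendsto_id
  have hG' := ((Complex.continuous_im.tendsto _).comp hG).add
    ((Complex.continuous_im.tendsto _).comp hstrip)
  have hS : Tendsto (fun R : ℝ => -(Real.exp (-U) * (2 * Real.arctan (Real.sinh R / Real.sin θ))))
      atTop (𝓝 (-(Real.exp (-U) * (2 * (π / 2))))) := by
    have h1 : Tendsto (fun R : ℝ => Real.sinh R / Real.sin θ) atTop atTop := by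
      refine Tendsto.atTop_div_const hsin (tendsto_atTop_mono' _ ?_ tendsto_id)
      filter_upwards [eventually_ge_atTop 0] with R hR using Real.self_le_sinh_iff.mpr hR
    exact ((((Real.tendsto_arctan_atTop.mono_right nhdsWithin_le_nhds).comp h1).const_mul
      2).const_mul _).neg
  have := tendsto_nhds_unique hG' (hS.congr fun R => by
    have hI := integral_im_inv_sinh_line θ R hsin
    have hE : Complex.exp (-(U : ℂ)) = (Real.exp (-U) : ℂ) := by push_cast; rfl
    simp only [Function.comp, id, Complex.sub_im, hreal, hsplit, hE, Complex.im_ofReal_mul, hI]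
    ring)
  simp only [Complex.zero_im, add_zero] at this
  rw [this]
  ring

/-- Cauchy's integral formula on a sector for `exp (-U z ^ δ)`, at a point of the positive axis. -/
theorem im_integral_sector_kernel (δ θ u p : ℝ) (hδ : 0 < δ) (hu : 0 < u) (hp : 0 < p)
    (hθ : π / 2 < θ) (hθπ : θ < π) (hδθ : δ * θ < π / 2) :
    (∫ x in Ioi (0 : ℝ), Complex.exp (θ * Complex.I) / (p - x * Complex.exp (θ * Complex.I)) *
      Complex.exp (-(u * (x ^ δ : ℝ) * Complex.exp (δ * θ * Complex.I)))).im =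
      π * Real.exp (-(u * p ^ δ)) := by
  have h1 := im_integral_sector_kernel_one δ θ (u * p ^ δ) hδ (by positivity) hθ hθπ hδθ
  rw [← h1]
  have h2 := integral_comp_mul_left_Ioi (fun x : ℝ => Complex.exp (θ * Complex.I) /
      (p - x * Complex.exp (θ * Complex.I)) *
      Complex.exp (-(u * (x ^ δ : ℝ) * Complex.exp (δ * θ * Complex.I)))) 0 hp
  rw [mul_zero, eq_inv_smul_iff₀ hp.ne', ← integral_smul] at h2
  rw [← h2]
  congr 1
  refine setIntegral_congr_fun measurableSet_Ioi fun x hx => ?_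
  simp only [Complex.real_smul]
  rw [Real.mul_rpow hp.le (le_of_lt hx)]
  have hp' : (p : ℂ) ≠ 0 := by exact_mod_cast hp.ne'
  push_cast
  rw [← mul_assoc]
  congr 1
  · rw [show (p : ℂ) - p * x * Complex.exp (θ * Complex.I) =
      p * (1 - x * Complex.exp (θ * Complex.I)) by ring, ← mul_div_assoc,
      mul_div_mul_left _ _ hp']
  · ring_nf

/-- Laplace transform of the Lévy density. -/
theorem integral_levy_density (c s : ℝ) (hc : 0 < c) (hs : 0 < s) :
    ∫ u in Ioi (0 : ℝ), c / (2 * √π) * u ^ (-(3 / 2) : ℝ) * Real.exp (-c ^ 2 / (4 * u)) *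
      Real.exp (-s * u) = Real.exp (-c * √s) := by
  have hgauss : Integrable fun x : ℝ => Real.exp (-x ^ 2) := by
    simpa using integrable_exp_neg_mul_sq one_pos
  let Φ : ℝ → ℝ := fun z => ∫ x in Iic z, Real.exp (-x ^ 2)
  have hΦd : ∀ z, HasDerivAt Φ (Real.exp (-z ^ 2)) z := by
    intro z
    have h : ∀ w, Φ w = Φ 0 + ∫ x in (0 : ℝ)..w, Real.exp (-x ^ 2) := fun w => by
      rw [← intervalIntegral.integral_Iic_sub_Iic hgauss.integrableOn hgauss.integrableOn]
      ring
    rw [show Φ = fun w => Φ 0 + ∫ x in (0 : ℝ)..w, Real.exp (-x ^ 2) from funext h]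
    refine HasDerivAt.const_add _ (intervalIntegral.integral_hasDerivAt_right
      hgauss.intervalIntegrable ?_ ?_)
    · exact (by fun_prop : Continuous fun x : ℝ => Real.exp (-x ^ 2)).stronglyMeasurable
        |>.stronglyMeasurableAtFilter
    · fun_prop
  have hΦtop : Tendsto Φ atTop (𝓝 √π) := by
    have h := (aecover_Iic (μ := volume) (tendsto_id (α := ℝ) (x := atTop)))
      |>.integral_tendsto_of_countably_generated hgauss
    rwa [show ∫ x : ℝ, Real.exp (-x ^ 2) = √π by simpa using integral_gaussian 1] at h
  have hΦbot : Tendsto Φ atBot (𝓝 0) := by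
    have h : ∀ w, Φ w = Φ 0 - ∫ x in w..(0 : ℝ), Real.exp (-x ^ 2) := fun w => by
      rw [← intervalIntegral.integral_Iic_sub_Iic hgauss.integrableOn hgauss.integrableOn]
      ring
    have h2 := (intervalIntegral_tendsto_integral_Iic 0 hgauss.integrableOn tendsto_id).const_sub
      (Φ 0)
    simp only [Φ, sub_self] at h2
    exact h2.congr fun w => (h w).symm
  let q : ℝ → ℝ := fun u => √s * √u - c / (2 * √u)
  let r : ℝ → ℝ := fun u => -(√s * √u) - c / (2 * √u)
  let H : ℝ → ℝ := fun u => (√π)⁻¹ * (Real.exp (-(c * √s)) * Φ (q u) + Real.exp (c * √s) * Φ (r u))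
  have hsq : ∀ u : ℝ, 0 < u → HasDerivAt (fun u => c / (2 * √u)) (-(c / (4 * (u * √u)))) u := by
    intro u hu
    have hu' : √u ≠ 0 := (Real.sqrt_pos.mpr hu).ne'
    have h := ((Real.hasDerivAt_sqrt hu.ne').const_mul 2).inv (by positivity) |>.const_mul c
    refine (h.congr_deriv ?_)
    rw [mul_pow, Real.sq_sqrt hu.le]
    field_simp
    ring
  have hqd : ∀ u : ℝ, 0 < u → HasDerivAt q (√s * (1 / (2 * √u)) + c / (4 * (u * √u))) u := by
    intro u hu
    refine (((Real.hasDerivAt_sqrt hu.ne').const_mul √s).sub (hsq u hu)).congr_deriv ?_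
    ring
  have hrd : ∀ u : ℝ, 0 < u → HasDerivAt r (-(√s * (1 / (2 * √u))) + c / (4 * (u * √u))) u := by
    intro u hu
    refine (((Real.hasDerivAt_sqrt hu.ne').const_mul √s).neg.sub (hsq u hu)).congr_deriv ?_
    ring
  have hsqrt0 : Tendsto (fun u : ℝ => √u) (𝓝[>] 0) (𝓝[>] 0) := by
    refine tendsto_nhdsWithin_iff.mpr ⟨?_, ?_⟩
    · have h := Real.continuous_sqrt.tendsto 0
      rw [Real.sqrt_zero] at h
      exact h.mono_left nhdsWithin_le_nhds
    · filter_upwards [self_mem_nhdsWithin] with u hu using Real.sqrt_pos.mpr hu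
  have hinv0 : Tendsto (fun u : ℝ => c / (2 * √u)) (𝓝[>] 0) atTop := by
    have h := (tendsto_inv_nhdsGT_zero.comp hsqrt0).const_mul_atTop (half_pos hc)
    refine h.congr fun u => ?_
    simp only [Function.comp]
    ring
  have hlin0 : Tendsto (fun u : ℝ => √s * √u) (𝓝[>] 0) (𝓝 0) := by
    simpa using (hsqrt0.mono_right nhdsWithin_le_nhds).const_mul √s
  have hlinTop : Tendsto (fun u : ℝ => √s * √u) atTop atTop :=
    Real.tendsto_sqrt_atTop.const_mul_atTop (Real.sqrt_pos.mpr hs)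
  have hinvTop : Tendsto (fun u : ℝ => c / (2 * √u)) atTop (𝓝 0) :=
    (Real.tendsto_sqrt_atTop.const_mul_atTop two_pos).const_div_atTop c
  have hq0 : Tendsto q (𝓝[>] 0) atBot := by
    simpa only [q, sub_eq_add_neg, Function.comp_def] using
      hlin0.add_atBot (tendsto_neg_atTop_atBot.comp hinv0)
  have hr0 : Tendsto r (𝓝[>] 0) atBot := by
    simpa only [r, sub_eq_add_neg, Function.comp_def] using
      hlin0.neg.add_atBot (tendsto_neg_atTop_atBot.comp hinv0)
  have hqTop : Tendsto q atTop atTop := by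
    simpa only [q, sub_eq_add_neg] using hlinTop.atTop_add hinvTop.neg
  have hrTop : Tendsto r atTop atBot := by
    simpa only [r, sub_eq_add_neg, Function.comp_def] using
      (tendsto_neg_atTop_atBot.comp hlinTop).atBot_add hinvTop.neg
  have hπ : √π ≠ 0 := (Real.sqrt_pos.mpr Real.pi_pos).ne'
  have hH0 : Tendsto H (𝓝[>] 0) (𝓝 0) := by
    simpa [H] using (((hΦbot.comp hq0).const_mul (Real.exp (-(c * √s)))).add
      ((hΦbot.comp hr0).const_mul (Real.exp (c * √s)))).const_mul (√π)⁻¹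
  have hHTop : Tendsto H atTop (𝓝 (Real.exp (-c * √s))) := by
    have h := (((hΦtop.comp hqTop).const_mul (Real.exp (-(c * √s)))).add
      ((hΦbot.comp hrTop).const_mul (Real.exp (c * √s)))).const_mul (√π)⁻¹
    rw [show (√π)⁻¹ * (Real.exp (-(c * √s)) * √π + Real.exp (c * √s) * 0) =
      Real.exp (-c * √s) by field_simp; simp] at h
    exact h
  have hHd : ∀ u : ℝ, 0 < u → HasDerivAt H (c / (2 * √π) * u ^ (-(3 / 2) : ℝ) *
      Real.exp (-c ^ 2 / (4 * u)) * Real.exp (-s * u)) u := by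
    intro u hu
    have hu' : √u ≠ 0 := (Real.sqrt_pos.mpr hu).ne'
    have h := ((((hΦd (q u)).comp u (hqd u hu)).const_mul (Real.exp (-(c * √s)))).add
      (((hΦd (r u)).comp u (hrd u hu)).const_mul (Real.exp (c * √s)))).const_mul (√π)⁻¹
    refine h.congr_deriv ?_
    have e1 : Real.exp (-(c * √s)) * Real.exp (-q u ^ 2) =
        Real.exp (-c ^ 2 / (4 * u)) * Real.exp (-s * u) := by
      rw [← Real.exp_add, ← Real.exp_add]
      congr 1
      simp only [q]
      have h1 := Real.sq_sqrt hu.le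
      have h2 := Real.sq_sqrt hs.le
      rw [sub_sq, mul_pow, h1, h2, div_pow, mul_pow, h1]
      field_simp
      ring
    have e2 : Real.exp (c * √s) * Real.exp (-r u ^ 2) =
        Real.exp (-c ^ 2 / (4 * u)) * Real.exp (-s * u) := by
      rw [← Real.exp_add, ← Real.exp_add]
      congr 1
      simp only [r]
      have h1 := Real.sq_sqrt hu.le
      have h2 := Real.sq_sqrt hs.le
      rw [sub_sq, neg_sq, mul_pow, h1, h2, div_pow, mul_pow, h1]
      field_simp
      ring
    have e3 : u ^ (-(3 / 2) : ℝ) = (u * √u)⁻¹ := by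
      rw [Real.rpow_neg hu.le, Real.sqrt_eq_rpow, ← Real.rpow_one_add' hu.le (by norm_num)]
      norm_num
    rw [e3, ← mul_assoc (Real.exp (-(c * √s))), e1, ← mul_assoc (Real.exp (c * √s)), e2]
    field_simp
    ring
  have hcont : ContinuousWithinAt (Function.update H 0 0) (Ici 0) 0 := by
    rw [← continuousWithinAt_Ioi_iff_Ici, continuousWithinAt_update_same]
    simpa using hH0
  have key := integral_Ioi_of_hasDerivAt_of_nonneg hcont
    (g' := fun u => c / (2 * √π) * u ^ (-(3 / 2) : ℝ) *
      Real.exp (-c ^ 2 / (4 * u)) * Real.exp (-s * u))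
    (fun u hu => (hHd u hu).congr_of_eventuallyEq (by
      filter_upwards [eventually_ne_nhds (ne_of_gt (mem_Ioi.mp hu))] with x hx
      rw [Function.update_of_ne hx]))
    (fun u hu => by have := mem_Ioi.mp hu; positivity)
    (hHTop.congr' (by
      filter_upwards [eventually_ne_atTop 0] with x hx
      rw [Function.update_of_ne hx]))
  rw [key]
  simp

theorem integrableOn_exp_neg_add_rpow (δ κ y : ℝ) (hδ : 0 < δ) (hδ1 : δ < 1) (hκ : 0 < κ) :
    IntegrableOn (fun x : ℝ => Real.exp (-(κ * x)) * Real.exp (y * x ^ δ)) (Ioi 0) := by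
  refine integrable_of_isBigO_exp_neg (b := κ / 2) (half_pos hκ) ?_ ?_
  · exact ContinuousOn.mul (by fun_prop)
      (((Real.continuous_rpow_const hδ.le).const_mul y).rexp.continuousOn)
  · have h1 : Tendsto (fun x : ℝ => y * x ^ (-(1 - δ))) atTop (𝓝 (y * 0)) :=
      (tendsto_rpow_neg_atTop (by linarith)).const_mul y
    rw [mul_zero] at h1
    refine Asymptotics.IsBigO.of_bound 1 ?_
    filter_upwards [h1.eventually_le_const (half_pos hκ), eventually_gt_atTop 0] with x hx hx0
    rw [← Real.exp_add, Real.norm_eq_abs, Real.norm_eq_abs, abs_of_pos (Real.exp_pos _),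
      abs_of_pos (Real.exp_pos _), one_mul]
    gcongr
    have h2 : y * x ^ δ = (y * x ^ (-(1 - δ))) * x := by
      rw [mul_assoc, ← Real.rpow_add_one hx0.ne']
      ring_nf
    rw [h2]
    nlinarith

theorem inv_Gamma_one_sub (s : ℝ) (hs : 0 < s) :
    (Real.Gamma (1 - s))⁻¹ = Real.Gamma s * Real.sin (π * s) / π := by
  have h := Real.Gamma_mul_Gamma_one_sub s
  have hG := (Real.Gamma_pos_of_pos hs).ne'
  rw [mul_comm, ← eq_div_iff hG] at h
  rw [h, inv_div, div_div_eq_mul_div]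

theorem integral_rpow_mul_exp_mul_exp (s θ : ℝ) (hs : 0 ≤ s) (hθ : π / 2 < θ) (hθπ : θ < π) :
    ∫ x in Ioi (0 : ℝ), ((x ^ s : ℝ) : ℂ) * Complex.exp (x * Complex.exp (θ * Complex.I)) =
      Complex.exp (-((s + 1) * (θ - π) * Complex.I)) * Real.Gamma (s + 1) := by
  have h := integral_rpow_mul_exp_ray (s + 1) (θ - π) (by linarith)
    (by rw [abs_lt]; constructor <;> linarith)
  have h2 : Complex.exp (((θ - π : ℝ) : ℂ) * Complex.I) = -Complex.exp (θ * Complex.I) := by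
    push_cast
    rw [sub_mul, Complex.exp_sub, Complex.exp_pi_mul_I, div_neg, div_one]
  rw [h2] at h
  simp only [add_sub_cancel_right, mul_neg, neg_neg] at h
  rw [h]
  push_cast
  rfl

/-- Hankel-type representation of the Wright function along a ray of angle `θ`. -/
theorem Mwr_eq_im_integral (δ θ y : ℝ) (hδ : 0 < δ) (hδ1 : δ < 1) (hy : 0 < y)
    (hθ : π / 2 < θ) (hθπ : θ < π) :
    δ * y * Mwr y δ = (∫ x in Ioi (0 : ℝ), Complex.exp (θ * Complex.I) *
      Complex.exp (x * Complex.exp (θ * Complex.I)) *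
      Complex.exp (-(y * (x ^ δ : ℝ) * Complex.exp (δ * θ * Complex.I)))).im / π := by
  have hcos : Real.cos θ < 0 := Real.cos_neg_of_pi_div_two_lt_of_lt hθ (by linarith)
  let F : ℕ → ℝ → ℂ := fun n x => Complex.exp (θ * Complex.I) *
      Complex.exp (x * Complex.exp (θ * Complex.I)) *
      ((-(y * (x ^ δ : ℝ) * Complex.exp (δ * θ * Complex.I))) ^ n / n.factorial)
  have hsum : HasSum (fun n => ∫ x in Ioi (0 : ℝ), F n x)
      (∫ x in Ioi (0 : ℝ), Complex.exp (θ * Complex.I) *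
      Complex.exp (x * Complex.exp (θ * Complex.I)) *
      Complex.exp (-(y * (x ^ δ : ℝ) * Complex.exp (δ * θ * Complex.I)))) := by
    refine hasSum_integral_of_dominated_convergence
      (fun n x => Real.exp (-(-Real.cos θ * x)) * ((y * x ^ δ) ^ n / n.factorial)) ?_ ?_ ?_ ?_ ?_
    · intro n
      exact Measurable.aestronglyMeasurable (by fun_prop)
    · intro n
      refine (ae_restrict_iff' measurableSet_Ioi).mpr (ae_of_all _ fun x hx => le_of_eq ?_)
      have hx' : 0 < x := hx
      simp only [F]
      rw [norm_mul, norm_mul, Complex.norm_exp_ofReal_mul_I, one_mul, norm_div, norm_pow, norm_neg,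
        norm_mul, norm_mul, ← Complex.ofReal_mul δ, Complex.norm_exp_ofReal_mul_I, mul_one,
        Complex.norm_natCast, Complex.norm_real, Complex.norm_real, Real.norm_of_nonneg hy.le,
        Real.norm_of_nonneg (by positivity), Complex.norm_exp]
      congr 2
      simp [Complex.exp_re]
      ring
    · exact ae_of_all _ fun x => (Real.summable_pow_div_factorial _).mul_left _
    · have h := integrableOn_exp_neg_add_rpow δ (-Real.cos θ) y hδ hδ1 (by linarith)
      refine h.congr (ae_of_all _ fun x => ?_)
      simp only
      rw [tsum_mul_left, Real.exp_eq_exp_ℝ, NormedSpace.exp_eq_tsum_div]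
    · refine ae_of_all _ fun x => ?_
      refine HasSum.mul_left _ ?_
      rw [Complex.exp_eq_exp_ℂ]
      exact NormedSpace.expSeries_div_hasSum_exp _
  have hterm : ∀ n : ℕ, ∫ x in Ioi (0 : ℝ), F n x =
      (((-y) ^ n / n.factorial * Real.Gamma (δ * n + 1) : ℝ) : ℂ) *
        Complex.exp ((π * (δ * n + 1) : ℝ) * Complex.I) := by
    intro n
    have h1 : ∀ x ∈ Ioi (0 : ℝ), F n x = ((-y) ^ n / n.factorial *
        Complex.exp ((δ * n + 1) * θ * Complex.I)) * (((x ^ (δ * n) : ℝ) : ℂ) *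
          Complex.exp (x * Complex.exp (θ * Complex.I))) := by
      intro x hx
      simp only [F]
      rw [Real.rpow_mul_natCast (le_of_lt hx), neg_eq_neg_one_mul, mul_pow, mul_pow, mul_pow,
        ← Complex.exp_nat_mul, show ((δ * n + 1) * θ * Complex.I : ℂ) =
        θ * Complex.I + n * (δ * θ * Complex.I) by ring, Complex.exp_add, neg_pow (y : ℂ)]
      push_cast
      ring
    rw [setIntegral_congr_fun measurableSet_Ioi h1, integral_const_mul]
    have h2 := integral_rpow_mul_exp_mul_exp (δ * n) θ (by positivity) hθ hθπ
    rw [h2]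
    have h3 : Complex.exp ((π * (δ * n + 1) : ℝ) * Complex.I) =
        Complex.exp ((δ * n + 1) * θ * Complex.I) *
        Complex.exp (-(((δ * n : ℝ) + 1) * (θ - π) * Complex.I)) := by
      rw [← Complex.exp_add]
      congr 1
      push_cast
      ring
    rw [h3]
    push_cast
    ring
  have him := (Complex.hasSum_im hsum).div_const π
  rw [← hasSum_nat_add_iff' 1] at him
  simp only [Finset.sum_range_one, hterm, Complex.im_ofReal_mul, Complex.exp_ofReal_mul_I_im] at him
  simp only [Nat.cast_zero, mul_zero, zero_add, mul_one, Real.sin_pi, zero_div, sub_zero] at him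
  rw [← him.tsum_eq, Mwr, ← tsum_mul_left]
  congr 1
  ext n
  have hs : 0 < δ * ((n : ℝ) + 1) := by positivity
  have h1 : -δ * (n : ℝ) + 1 - δ = 1 - δ * (n + 1) := by ring
  rw [h1, div_eq_mul_inv, mul_inv, inv_Gamma_one_sub _ hs]
  push_cast
  rw [Real.Gamma_add_one hs.ne', mul_add π, mul_one π, Real.sin_add_pi, Nat.factorial_succ]
  have : (n.factorial : ℝ) ≠ 0 := by positivity
  have hn : (n : ℝ) + 1 ≠ 0 := by positivity
  push_cast
  field_simp
  ring

theorem Mwr_scaled_eq_im_integral (δ θ u t : ℝ) (hδ : 0 < δ) (hδ1 : δ < 1) (hu : 0 < u)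
    (ht : 0 < t) (hθ : π / 2 < θ) (hθπ : θ < π) :
    δ * u / t ^ (δ + 1) * Mwr (u / t ^ δ) δ = (∫ x in Ioi (0 : ℝ), Complex.exp (θ * Complex.I) *
      Complex.exp (t * (x * Complex.exp (θ * Complex.I))) *
      Complex.exp (-(u * (x ^ δ : ℝ) * Complex.exp (δ * θ * Complex.I)))).im / π := by
  have h1 := Mwr_eq_im_integral δ θ (u / t ^ δ) hδ hδ1 (by positivity) hθ hθπ
  have h2 := integral_comp_mul_left_Ioi (fun x : ℝ => Complex.exp (θ * Complex.I) *
      Complex.exp (x * Complex.exp (θ * Complex.I)) *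
      Complex.exp (-((u / t ^ δ : ℝ) * (x ^ δ : ℝ) * Complex.exp (δ * θ * Complex.I)))) 0 ht
  rw [mul_zero] at h2
  have h3 : ∫ x in Ioi (0 : ℝ), Complex.exp (θ * Complex.I) *
      Complex.exp (t * (x * Complex.exp (θ * Complex.I))) *
      Complex.exp (-(u * (x ^ δ : ℝ) * Complex.exp (δ * θ * Complex.I))) =
      ∫ x in Ioi (0 : ℝ), Complex.exp (θ * Complex.I) *
      Complex.exp ((t * x : ℝ) * Complex.exp (θ * Complex.I)) *
      Complex.exp (-((u / t ^ δ : ℝ) * ((t * x) ^ δ : ℝ) * Complex.exp (δ * θ * Complex.I))) := by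
    refine setIntegral_congr_fun measurableSet_Ioi fun x hx => ?_
    have h4 : u / t ^ δ * (t * x) ^ δ = u * x ^ δ := by
      rw [Real.mul_rpow ht.le (le_of_lt hx)]
      field_simp
    rw [← Complex.ofReal_mul (u / t ^ δ), h4]
    push_cast
    ring_nf
  rw [h3, h2, Complex.smul_im, smul_eq_mul, mul_div_assoc t⁻¹, ← h1, Real.rpow_add_one ht.ne']
  field_simp

theorem integrableOn_rpow_neg_mul_exp_neg_div (m a : ℝ) (hm : 1 < m) (ha : 0 < a) :
    IntegrableOn (fun u : ℝ => u ^ (-m) * Real.exp (-a / u)) (Ioi 0) := by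
  have h := integrableOn_rpow_mul_exp_neg_mul_rpow (s := m - 2) (p := 1) (b := a)
    (by linarith) one_pos ha
  rw [← integrableOn_Ioi_comp_rpow_iff' _ (by norm_num : (-1 : ℝ) ≠ 0)] at h
  refine h.congr_fun (fun u hu => ?_) measurableSet_Ioi
  have hu' : 0 < u := hu
  simp only [smul_eq_mul]
  rw [← Real.rpow_mul hu'.le, ← mul_assoc, ← Real.rpow_add hu', Real.rpow_one, Real.rpow_neg_one]
  ring_nf

/-- The integrand `(u, x) ↦ w(u) exp (-κ u x ^ δ)` is integrable on the quadrant when `w` is a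
tempered Lévy weight. -/
theorem integrable_levy_weight_mul_exp (δ κ c k : ℝ) (hδ : 0 < δ) (hκ : 0 < κ) (hc : 0 < c) :
    Integrable (fun z : ℝ × ℝ => c / (2 * √π) * z.1 ^ (-(3 / 2) : ℝ) *
      Real.exp (-c ^ 2 / (4 * z.1)) * Real.exp (-k ^ 2 * z.1) *
        Real.exp (-(z.1 * κ) * z.2 ^ δ))
      ((volume.restrict (Ioi 0)).prod (volume.restrict (Ioi 0))) := by
  have hmeas : AEStronglyMeasurable (fun z : ℝ × ℝ => c / (2 * √π) * z.1 ^ (-(3 / 2) : ℝ) *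
      Real.exp (-c ^ 2 / (4 * z.1)) * Real.exp (-k ^ 2 * z.1) *
        Real.exp (-(z.1 * κ) * z.2 ^ δ))
      ((volume.restrict (Ioi 0)).prod (volume.restrict (Ioi 0))) :=
    Measurable.aestronglyMeasurable (by fun_prop)
  rw [integrable_prod_iff hmeas]
  have hx : ∀ u : ℝ, 0 < u →
      IntegrableOn (fun x : ℝ => Real.exp (-(u * κ) * x ^ δ)) (Ioi 0) := by
    intro u hu
    simpa using integrableOn_rpow_mul_exp_neg_mul_rpow (s := 0) (p := δ) (b := u * κ)
      (by norm_num) hδ (by positivity)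
  constructor
  · refine (ae_restrict_iff' measurableSet_Ioi).mpr (ae_of_all _ fun u hu => ?_)
    exact (hx u hu).const_mul (c / (2 * √π) * u ^ (-(3 / 2) : ℝ) * Real.exp (-c ^ 2 / (4 * u)) *
      Real.exp (-k ^ 2 * u))
  · have h := (integrableOn_rpow_neg_mul_exp_neg_div (3 / 2 + 1 / δ) (c ^ 2 / 4)
      (by have := one_div_pos.mpr hδ; linarith) (by positivity)).const_mul
      (c / (2 * √π) * (κ ^ (-1 / δ) * Real.Gamma (1 / δ + 1)))
    refine Integrable.mono' h ?_ ?_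
    · exact hmeas.norm.integral_prod_right'
    · refine (ae_restrict_iff' measurableSet_Ioi).mpr (ae_of_all _ fun u hu => ?_)
      have hu' : 0 < u := hu
      have h1 : ∀ x : ℝ, ‖c / (2 * √π) * u ^ (-(3 / 2) : ℝ) * Real.exp (-c ^ 2 / (4 * u)) *
          Real.exp (-k ^ 2 * u) * Real.exp (-(u * κ) * x ^ δ)‖ =
          c / (2 * √π) * u ^ (-(3 / 2) : ℝ) * Real.exp (-c ^ 2 / (4 * u)) *
          Real.exp (-k ^ 2 * u) * Real.exp (-(u * κ) * x ^ δ) := fun x =>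
        Real.norm_of_nonneg (by positivity)
      have hG := Real.Gamma_pos_of_pos (by positivity : 0 < 1 / δ + 1)
      simp only [h1]
      rw [integral_const_mul, integral_exp_neg_mul_rpow hδ (by positivity),
        Real.norm_of_nonneg (by positivity),
        Real.mul_rpow hu'.le hκ.le]
      have h2 : Real.exp (-k ^ 2 * u) ≤ 1 := by
        rw [Real.exp_le_one_iff]
        nlinarith [sq_nonneg k]
      have h3 : u ^ (-(3 / 2 + 1 / δ)) = u ^ (-(3 / 2) : ℝ) * u ^ (-1 / δ) := by
        rw [← Real.rpow_add hu']
        ring_nf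
      have h4 : -(c ^ 2 / 4) / u = -c ^ 2 / (4 * u) := by
        field_simp
      rw [h3, h4]
      calc _ = c / (2 * √π) * u ^ (-(3 / 2) : ℝ) * Real.exp (-c ^ 2 / (4 * u)) *
            (u ^ (-1 / δ) * κ ^ (-1 / δ) * Real.Gamma (1 / δ + 1)) * Real.exp (-k ^ 2 * u) := by
            ring
        _ ≤ c / (2 * √π) * u ^ (-(3 / 2) : ℝ) * Real.exp (-c ^ 2 / (4 * u)) *
            (u ^ (-1 / δ) * κ ^ (-1 / δ) * Real.Gamma (1 / δ + 1)) * 1 := by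
            gcongr
        _ = _ := by ring

/-- Lemma part (b), equation (2.15): for `0 < 2β < 1`, `c > 0`, `k ≥ 0`, `p > 0`,
`L{ (βc/(√π t^{2β+1})) ∫_0^∞ u^{-1/2} e^{-c²/(4u)} e^{-k²u} M(u/t^{2β}; 2β) du }(p)
  = exp(−c √(p^{2β} + k²))`. -/
theorem laplace_lemma_b (β c k p : ℝ) (hβ₁ : 0 < 2 * β) (hβ₂ : 2 * β < 1)
    (hc : 0 < c) (hk : 0 ≤ k) (hp : 0 < p) :
    ∫ t in Ioi (0 : ℝ), Real.exp (-p * t) *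
        ((β * c / (Real.sqrt π * t ^ (2 * β + 1))) *
          ∫ u in Ioi (0 : ℝ), u ^ (-(1 / 2 : ℝ)) * Real.exp (-c ^ 2 / (4 * u)) *
            Real.exp (-k ^ 2 * u) * Mwr (u / t ^ (2 * β)) (2 * β)) =
      Real.exp (-c * Real.sqrt (p ^ (2 * β) + k ^ 2)) := by
  obtain ⟨δ, hδ⟩ : ∃ δ, δ = 2 * β := ⟨_, rfl⟩
  have hβ : β = δ / 2 := by linarith
  rw [← hδ] at hβ₁ hβ₂
  simp only [← hδ]
  subst hβ
  clear hδ
  obtain ⟨θ, hθ, hθπ, hδθ⟩ : ∃ θ, π / 2 < θ ∧ θ < π ∧ δ * θ < π / 2 := by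
    have hπ := Real.pi_pos
    refine ⟨π / (1 + δ), ?_, ?_, ?_⟩
    · rw [div_lt_div_iff₀ two_pos (by linarith)]
      nlinarith
    · rw [div_lt_iff₀ (by linarith)]
      nlinarith
    · rw [← mul_div_assoc, div_lt_div_iff₀ (by linarith) two_pos]
      nlinarith
  have hcos : Real.cos θ < 0 := Real.cos_neg_of_pi_div_two_lt_of_lt hθ (by linarith [Real.pi_pos])
  have hcosδ : 0 < Real.cos (δ * θ) :=
    Real.cos_pos_of_mem_Ioo ⟨by nlinarith [Real.pi_pos], hδθ⟩
  let ν : Measure ℝ := volume.restrict (Ioi 0)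
  let W : ℝ → ℝ := fun u => c / (2 * √π) * u ^ (-(3 / 2) : ℝ) *
      Real.exp (-c ^ 2 / (4 * u)) * Real.exp (-k ^ 2 * u)
  let F : ℝ × (ℝ × ℝ) → ℂ := fun z => W z.2.1 * (Complex.exp (θ * Complex.I) *
    Complex.exp (-(z.2.1 * (z.2.2 ^ δ : ℝ) * Complex.exp (δ * θ * Complex.I)))) *
    Complex.exp ((z.2.2 * Complex.exp (θ * Complex.I) - p) * z.1)
  have hF : Integrable F (ν.prod (ν.prod ν)) := by
    have h1 : Integrable (fun t : ℝ => Real.exp (-p * t)) ν :=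
      integrableOn_exp_mul_Ioi (neg_neg_of_pos hp) 0
    have h2 := h1.mul_prod (integrable_levy_weight_mul_exp δ (Real.cos (δ * θ)) c k hβ₁ hcosδ hc)
    refine Integrable.mono' h2 (Measurable.aestronglyMeasurable (by fun_prop)) ?_
    have hpos : ∀ᵐ z ∂(ν.prod (ν.prod ν)), 0 < z.1 ∧ 0 < z.2.1 ∧ 0 < z.2.2 := by
      simp only [ν, Measure.prod_restrict]
      refine (ae_restrict_iff' (measurableSet_Ioi.prod
        (measurableSet_Ioi.prod measurableSet_Ioi))).mpr (ae_of_all _ fun z hz => ?_)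
      exact ⟨hz.1, hz.2.1, hz.2.2⟩
    filter_upwards [hpos] with z hz
    obtain ⟨ht, hu, hx⟩ := hz
    have hW : 0 ≤ W z.2.1 := by positivity
    simp only [F]
    rw [norm_mul, norm_mul, norm_mul, Complex.norm_exp_ofReal_mul_I, one_mul, Complex.norm_real,
      Real.norm_of_nonneg hW, mul_comm (Real.exp (-p * z.1))]
    refine mul_le_mul (le_of_eq ?_) ?_ (norm_nonneg _) (by positivity)
    · congr 1
      rw [Complex.norm_exp]
      congr 1
      simp [Complex.exp_re, Complex.exp_im]
      ring
    · rw [Complex.norm_exp]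
      gcongr
      simp [Complex.exp_re, Complex.exp_im]
      nlinarith [mul_pos hx ht]
  have hleft : ∀ᵐ t ∂ν, Real.exp (-p * t) *
        ((δ / 2 * c / (√π * t ^ (δ + 1))) *
          ∫ u in Ioi (0 : ℝ), u ^ (-(1 / 2 : ℝ)) * Real.exp (-c ^ 2 / (4 * u)) *
            Real.exp (-k ^ 2 * u) * Mwr (u / t ^ δ) δ) = (∫ z, F (t, z) ∂(ν.prod ν)).im / π := by
    filter_upwards [hF.prod_right_ae, ae_restrict_mem measurableSet_Ioi] with t hFt ht
    have ht' : 0 < t := ht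
    rw [integral_prod _ hFt, ← Complex.imCLM_apply,
      ← Complex.imCLM.integral_comp_comm hFt.integral_prod_left, ← integral_div,
      ← integral_const_mul, ← integral_const_mul]
    refine setIntegral_congr_fun measurableSet_Ioi fun u hu => ?_
    have hu' : 0 < u := hu
    have h1 := Mwr_scaled_eq_im_integral δ θ u t hβ₁ hβ₂ hu ht hθ hθπ
    have h2 : ∫ x, F (t, u, x) ∂ν = ((Real.exp (-p * t) * W u : ℝ) : ℂ) *
        ∫ x in Ioi (0 : ℝ), Complex.exp (θ * Complex.I) *
          Complex.exp (t * (x * Complex.exp (θ * Complex.I))) *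
          Complex.exp (-(u * (x ^ δ : ℝ) * Complex.exp (δ * θ * Complex.I))) := by
      rw [← integral_const_mul]
      congr 1
      ext x
      simp only [F]
      rw [show (x * Complex.exp (θ * Complex.I) - p) * t =
        t * (x * Complex.exp (θ * Complex.I)) + -p * t by ring, Complex.exp_add]
      push_cast
      ring
    rw [h2, Complex.imCLM_apply, Complex.im_ofReal_mul,
      mul_div_assoc (Real.exp (-p * t) * W u), ← h1]
    have h3 : u ^ (-(1 / 2 : ℝ)) = u ^ (-(3 / 2) : ℝ) * u := by
      rw [← Real.rpow_add_one hu'.ne']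
      norm_num
    simp only [W]
    rw [h3]
    field_simp
  have hright : ∀ᵐ z ∂(ν.prod ν), ∫ t, F (t, z) ∂ν = W z.1 *
      (Complex.exp (θ * Complex.I) / (p - z.2 * Complex.exp (θ * Complex.I)) *
      Complex.exp (-(z.1 * (z.2 ^ δ : ℝ) * Complex.exp (δ * θ * Complex.I)))) := by
    have hpos : ∀ᵐ z ∂(ν.prod ν), 0 < z.2 := by
      simp only [ν, Measure.prod_restrict]
      exact (ae_restrict_iff' (measurableSet_Ioi.prod measurableSet_Ioi)).mpr
        (ae_of_all _ fun z hz => hz.2)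
    filter_upwards [hpos] with z hz
    simp only [F]
    rw [integral_const_mul]
    have h1 : (z.2 * Complex.exp (θ * Complex.I) - p).re < 0 := by
      simp [Complex.exp_re]
      nlinarith
    have h2 := integral_exp_mul_complex_Ioi h1 0
    rw [h2, Complex.ofReal_zero, mul_zero, Complex.exp_zero,
      ← neg_sub (z.2 * Complex.exp (θ * Complex.I)) (p : ℂ), div_neg, neg_div, div_eq_mul_inv,
      div_eq_mul_inv]
    ring
  calc _ = ∫ t, (∫ z, F (t, z) ∂(ν.prod ν)).im / π ∂ν := integral_congr_ae hleft
    _ = (∫ t, ∫ z, F (t, z) ∂(ν.prod ν) ∂ν).im / π := by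
      rw [integral_div]
      congr 1
      exact Complex.imCLM.integral_comp_comm hF.integral_prod_left
    _ = (∫ z, ∫ t, F (t, z) ∂ν ∂(ν.prod ν)).im / π := by
      rw [integral_integral_swap (f := fun t z => F (t, z)) hF]
    _ = ∫ u in Ioi (0 : ℝ), W u * Real.exp (-(u * p ^ δ)) := by
      rw [integral_congr_ae hright]
      have h_int := hF.integral_prod_right.congr hright
      rw [integral_prod _ h_int, ← Complex.imCLM_apply,
        ← Complex.imCLM.integral_comp_comm h_int.integral_prod_left, ← integral_div]
      refine setIntegral_congr_fun measurableSet_Ioi fun u hu => ?_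
      simp only
      rw [integral_const_mul, Complex.imCLM_apply, Complex.im_ofReal_mul,
        im_integral_sector_kernel δ θ u p hβ₁ hu hp hθ hθπ hδθ]
      field_simp
    _ = _ := by
      rw [← integral_levy_density c (p ^ δ + k ^ 2) hc (by positivity)]
      refine setIntegral_congr_fun measurableSet_Ioi fun u _ => ?_
      simp only [W]
      rw [mul_assoc, ← Real.exp_add]
      ring_nf
end

section
/- Verification of the Laplace-domain solution for the lumped formulation (equation (4.11) satisfies (4.2)–(4.4)). Let a, λ, α, γ > 0, s > 0 and C ∈ ℝ. Set K = −λ/a² + √(λ²/a⁴ + 4s/a²), Mₛ = √(γ² + s + (α/2)K), and v(x,z) = (2γC/(γ + Mₛ))·exp((γ − Mₛ)x)·exp(−(z/2)K). Then: (i) s·v(x,z) = a²·∂²v/∂z²(x,z) − λ·∂v/∂z(x,z) for all x, z; (ii) s·v(x,0) = ∂²v/∂x²(x,0) − 2γ·∂v/∂x(x,0) + α·∂v/∂z(x,0) for all x; (iii) ∂v/∂x(0,0) − 2γ·v(0,0) = −2γC; (iv) v(x,z) → 0 as x² + z² → ∞ with x, z ≥ 0. -/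
open Real Filter Set

lemma deriv_const_mul_exp_mul (A c : ℝ) :
    deriv (fun x => A * Real.exp (c * x)) = fun x => c * A * Real.exp (c * x) := by
  funext x
  have h : HasDerivAt (fun x => A * Real.exp (c * x)) (A * (Real.exp (c * x) * (c * 1))) x :=
    (((hasDerivAt_id x).const_mul c).exp).const_mul A
  rw [h.deriv]
  ring

lemma iteratedDeriv_two_const_mul_exp_mul (A c : ℝ) :
    iteratedDeriv 2 (fun x => A * Real.exp (c * x)) =
      fun x => c * (c * A) * Real.exp (c * x) := by
  rw [iteratedDeriv_succ, iteratedDeriv_one, deriv_const_mul_exp_mul, deriv_const_mul_exp_mul]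

/-- A positive linear form tends to infinity at infinity in the closed first quadrant. -/
lemma tendsto_linear_quadrant_atTop {p q : ℝ} (hp : 0 < p) (hq : 0 < q) :
    Tendsto (fun w : ℝ × ℝ => p * w.1 + q * w.2)
      ((comap (fun w : ℝ × ℝ => w.1 ^ 2 + w.2 ^ 2) atTop) ⊓
        𝓟 (Ici (0 : ℝ) ×ˢ Ici (0 : ℝ))) atTop := by
  have hm : 0 < min p q := lt_min hp hq
  have hroot : Tendsto (fun w : ℝ × ℝ => min p q * Real.sqrt (w.1 ^ 2 + w.2 ^ 2))
      ((comap (fun w : ℝ × ℝ => w.1 ^ 2 + w.2 ^ 2) atTop) ⊓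
        𝓟 (Ici (0 : ℝ) ×ˢ Ici (0 : ℝ))) atTop :=
    ((Real.tendsto_sqrt_atTop.comp tendsto_comap).const_mul_atTop hm).mono_left inf_le_left
  refine tendsto_atTop_mono' _ ?_ hroot
  filter_upwards [mem_inf_of_right (mem_principal_self _)] with w hw
  have hx : 0 ≤ w.1 := hw.1
  have hz : 0 ≤ w.2 := hw.2
  have hle : Real.sqrt (w.1 ^ 2 + w.2 ^ 2) ≤ w.1 + w.2 :=
    Real.sqrt_le_iff.2 ⟨by positivity, by nlinarith [mul_nonneg hx hz]⟩
  calc min p q * Real.sqrt (w.1 ^ 2 + w.2 ^ 2)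
      ≤ min p q * (w.1 + w.2) := by gcongr
    _ = min p q * w.1 + min p q * w.2 := by ring
    _ ≤ p * w.1 + q * w.2 := by
      gcongr
      exacts [min_le_left p q, min_le_right p q]

/-- `-λ/a² + √(λ²/a⁴ + 4s/a²)` is the positive root of `a²K² + 2λK = 4s`. -/
lemma positive_root_spec {a lam s K : ℝ} (ha : 0 < a) (hlam : 0 < lam) (hs : 0 < s)
    (hK : K = -lam / a ^ 2 + Real.sqrt (lam ^ 2 / a ^ 4 + 4 * s / a ^ 2)) :
    0 < K ∧ a ^ 2 * K ^ 2 + 2 * lam * K = 4 * s := by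
  have hsq : Real.sqrt (lam ^ 2 / a ^ 4 + 4 * s / a ^ 2) ^ 2 =
      lam ^ 2 / a ^ 4 + 4 * s / a ^ 2 := Real.sq_sqrt (by positivity)
  have hroot : Real.sqrt (lam ^ 2 / a ^ 4 + 4 * s / a ^ 2) = K + lam / a ^ 2 := by
    rw [hK]
    ring
  constructor
  · have hlt : lam / a ^ 2 < Real.sqrt (lam ^ 2 / a ^ 4 + 4 * s / a ^ 2) := by
      apply Real.lt_sqrt_of_sq_lt
      have hpos : 0 < 4 * s / a ^ 2 := by positivity
      have hpow : (lam / a ^ 2) ^ 2 = lam ^ 2 / a ^ 4 := by ring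
      linarith
    linarith
  · rw [hroot] at hsq
    field_simp at hsq
    refine mul_left_cancel₀ (pow_ne_zero 2 ha.ne') ?_
    linear_combination hsq

/-- Verification of the Laplace-domain solution (4.11) of the lumped formulation:
with `K = −λ/a² + √(λ²/a⁴ + 4s/a²)`, `Mₛ = √(γ² + s + (α/2)K)` and
`v(x,z) = (2γC/(γ + Mₛ)) e^{(γ − Mₛ)x} e^{−(z/2)K}`, the function `v`
satisfies (4.2)–(4.4). -/
theorem laplace_domain_lumped (a lam α γ s C : ℝ)
    (ha : 0 < a) (hlam : 0 < lam) (hα : 0 < α) (hγ : 0 < γ) (hs : 0 < s)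
    (K Ms : ℝ) (hK : K = -lam / a ^ 2 + Real.sqrt (lam ^ 2 / a ^ 4 + 4 * s / a ^ 2))
    (hMs : Ms = Real.sqrt (γ ^ 2 + s + (α / 2) * K))
    (v : ℝ → ℝ → ℝ)
    (hv : ∀ x z : ℝ, v x z =
      (2 * γ * C / (γ + Ms)) * Real.exp ((γ - Ms) * x) * Real.exp (-(z / 2) * K)) :
    (∀ x z : ℝ, s * v x z =
      a ^ 2 * iteratedDeriv 2 (fun z' => v x z') z - lam * deriv (fun z' => v x z') z) ∧
    (∀ x : ℝ, s * v x 0 =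
      iteratedDeriv 2 (fun x' => v x' 0) x - 2 * γ * deriv (fun x' => v x' 0) x +
        α * deriv (fun z' => v x z') 0) ∧
    deriv (fun x' => v x' 0) 0 - 2 * γ * v 0 0 = -(2 * γ * C) ∧
    Tendsto (fun w : ℝ × ℝ => v w.1 w.2)
      ((comap (fun w : ℝ × ℝ => w.1 ^ 2 + w.2 ^ 2) atTop) ⊓
        𝓟 (Ici (0 : ℝ) ×ˢ Ici (0 : ℝ))) (nhds 0) := by
  obtain ⟨hKpos, hKeq⟩ := positive_root_spec ha hlam hs hK
  have hMsq : Ms ^ 2 = γ ^ 2 + s + (α / 2) * K := by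
    rw [hMs]
    exact Real.sq_sqrt (by positivity)
  have hMγ : γ < Ms := by
    rw [hMs]
    apply Real.lt_sqrt_of_sq_lt
    nlinarith [mul_pos hα hKpos]
  have hsum : γ + Ms ≠ 0 := by linarith
  set A : ℝ := 2 * γ * C / (γ + Ms) with hA
  have hAmul : A * (γ + Ms) = 2 * γ * C := div_mul_cancel₀ _ hsum
  have hvz (x : ℝ) : (fun z' => v x z') =
      fun z' => (A * Real.exp ((γ - Ms) * x)) * Real.exp (-(K / 2) * z') := by
    funext z'
    rw [hv, show -(z' / 2) * K = -(K / 2) * z' by ring]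
  have hvx : (fun x' => v x' 0) = fun x' => A * Real.exp ((γ - Ms) * x') := by
    funext x'
    simp [hv]
  refine ⟨fun x z => ?_, fun x => ?_, ?_, ?_⟩
  · rw [hvz, iteratedDeriv_two_const_mul_exp_mul, deriv_const_mul_exp_mul, congrFun (hvz x) z]
    linear_combination
      (-(A * Real.exp ((γ - Ms) * x) * Real.exp (-(K / 2) * z)) / 4) * hKeq
  · rw [hvz, hvx, iteratedDeriv_two_const_mul_exp_mul, deriv_const_mul_exp_mul,
      deriv_const_mul_exp_mul, congrFun hvx x]
    simp only [mul_zero, Real.exp_zero, mul_one]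
    linear_combination (-(A * Real.exp ((γ - Ms) * x))) * hMsq
  · rw [hvx, deriv_const_mul_exp_mul, congrFun hvx 0]
    simp only [mul_zero, Real.exp_zero, mul_one]
    linear_combination -hAmul
  · have hlin := tendsto_linear_quadrant_atTop (sub_pos.2 hMγ) (half_pos hKpos)
    have hdecay := (Real.tendsto_exp_neg_atTop_nhds_zero.comp hlin).const_mul A
    rw [mul_zero] at hdecay
    refine hdecay.congr fun w => ?_
    rw [hv, mul_assoc, ← Real.exp_add, Function.comp_apply]
    ring_nf
end
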